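/- arXiv:math/0405244 — 2 statements merged into one kernel-verified Lean document; each statement's English description precedes it below -/
import Mathlib

section
/- For every real number l > 0, the pointwise power δ^l of the delta functional (so δ^l(0) = H′^(l·H²) and δ^l(a) = 0 for a ≠ 0) satisfies (F(δ^l))(b) = H′^((l−1)·H²) for every b ∈ X; that is, F(δ^l) is the constant functional with value H′^((l−1)·H²). -/
open Complex Finset

noncomputable section

/-- Balanced representative of `z : ZMod n` in `[-n/2, n/2)`. -/
def bval (n : ℕ) (z : ZMod n) : ℤ :=
  if 2 * (z.val : ℤ) < (n : ℤ) then (z.val : ℤ) else (z.val : ℤ) - (n : ℤ)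

/-- The real point `ε′·z′ ∈ [-H'/2, H'/2)` of `L′` corresponding to `v : ZMod (H'^2)`;
the group structure of `ZMod (H'^2)` realizes pointwise addition followed by
reduction modulo `H'` back into `L′`. -/
def Lp' (H' : ℕ) (v : ZMod (H' ^ 2)) : ℝ := (bval (H' ^ 2) v : ℝ) / H'

/-- `X` is the finite abelian group of all functions from `L` (`H²` points) to `L′`. -/
abbrev X (H H' : ℕ) := ZMod (H ^ 2) → ZMod (H' ^ 2)

/-- `⟨a,b⟩ = Σ_{k∈L} a(k)·b(k)`. -/
def ip (H H' : ℕ) [NeZero H] (a b : X H H') : ℝ :=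
  ∑ k : ZMod (H ^ 2), Lp' H' (a k) * Lp' H' (b k)

/-- `ε₀ = H′^(−H²)`. -/
def eps0 (H H' : ℕ) : ℝ := ((H' : ℝ) ^ (H ^ 2))⁻¹

/-- `ε′ = 1/H′`. -/
def eps' (H' : ℕ) : ℝ := 1 / H'

/-- `(Ff)(b) = Σ_{a∈X} ε₀·exp(−2πi⟨a,b⟩)·f(a)`. -/
def Ftr (H H' : ℕ) [NeZero H] [NeZero H'] (f : X H H' → ℂ) (b : X H H') : ℂ :=
  ∑ a : X H H',
    (eps0 H H' : ℂ) * Complex.exp (-2 * (Real.pi : ℂ) * I * (ip H H' a b : ℂ)) * f a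

/-- `(F̄f)(b) = Σ_{a∈X} ε₀·exp(2πi⟨a,b⟩)·f(a)`. -/
def Ftrinv (H H' : ℕ) [NeZero H] [NeZero H'] (f : X H H' → ℂ) (b : X H H') : ℂ :=
  ∑ a : X H H',
    (eps0 H H' : ℂ) * Complex.exp (2 * (Real.pi : ℂ) * I * (ip H H' a b : ℂ)) * f a

/-- `(f∗g)(a) = Σ_{a′∈X} ε₀·f(a−a′)·g(a′)`. -/
def conv (H H' : ℕ) [NeZero H] [NeZero H'] (f g : X H H' → ℂ) (a : X H H') : ℂ :=
  ∑ a' : X H H', (eps0 H H' : ℂ) * f (a - a') * g a'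

/-- `(f,g) = Σ_{b∈X} ε₀·conj(f(b))·g(b)`. -/
def iprod (H H' : ℕ) [NeZero H] [NeZero H'] (f g : X H H' → ℂ) : ℂ :=
  ∑ b : X H H', (eps0 H H' : ℂ) * (starRingEnd ℂ) (f b) * g b

/-- `δ(0) = H′^(H²)` and `δ(a) = 0` for `a ≠ 0`. -/
def delta (H H' : ℕ) [NeZero H] [NeZero H'] (a : X H H') : ℂ :=
  if a = 0 then (((H' : ℝ) ^ (H ^ 2) : ℝ) : ℂ) else 0

/-- Forward divided difference `(D₊,b f)(a) = (f(a + ε′b) − f(a))/ε′`,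
where `eb` is the element `ε′b` of `X`. -/
def Dp (H H' : ℕ) (eb : X H H') (f : X H H' → ℂ) (a : X H H') : ℂ :=
  (f (a + eb) - f a) / (eps' H' : ℂ)

/-- Backward divided difference `(D₋,b f)(a) = (f(a) − f(a − ε′b))/ε′`. -/
def Dm (H H' : ℕ) (eb : X H H') (f : X H H' → ℂ) (a : X H H') : ℂ :=
  (f a - f (a - eb)) / (eps' H' : ℂ)

/-- `λ_b(a) = (exp(2πi ε′⟨a,b⟩) − 1)/ε′`. -/
def lam (H H' : ℕ) [NeZero H] (b a : X H H') : ℂ :=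
  (Complex.exp (2 * (Real.pi : ℂ) * I * (eps' H' : ℂ) * (ip H H' a b : ℂ)) - 1) /
    (eps' H' : ℂ)

/-- `λ̄_b(a) = (exp(−2πi ε′⟨a,b⟩) − 1)/ε′`. -/
def lamBar (H H' : ℕ) [NeZero H] (b a : X H H') : ℂ :=
  (Complex.exp (-2 * (Real.pi : ℂ) * I * (eps' H' : ℂ) * (ip H H' a b : ℂ)) - 1) /
    (eps' H' : ℂ)

/-- for `l > 0`, `F(δ^l)` is the constant `H′^((l−1)H²)`, where
`δ^l(0) = H′^(l·H²)` and `δ^l(a) = 0` for `a ≠ 0`. -/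
theorem stmt7 (H H' : ℕ) [NeZero H] [NeZero H'] (hH : Even H) (hH' : Even H')
    (l : ℝ) (hl : 0 < l) (b : X H H') :
    Ftr H H'
        (fun a => if a = 0 then ((Real.rpow (H' : ℝ) (l * (H : ℝ) ^ 2) : ℝ) : ℂ) else 0) b =
      ((Real.rpow (H' : ℝ) ((l - 1) * (H : ℝ) ^ 2) : ℝ) : ℂ) := by
  have hpos : (0 : ℝ) < (H' : ℝ) := by exact_mod_cast Nat.pos_of_ne_zero (NeZero.ne H')
  have hn : 0 < H' ^ 2 := pow_pos (Nat.pos_of_ne_zero (NeZero.ne H')) 2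
  have hb0 : bval (H' ^ 2) 0 = 0 := by
    have h2 : (0 : ℤ) < ((H' ^ 2 : ℕ) : ℤ) := by exact_mod_cast hn
    unfold bval
    rw [ZMod.val_zero, Nat.cast_zero, mul_zero, if_pos h2]
  have hip : ip H H' 0 b = 0 := by
    simp [ip, Lp', hb0]
  have hr : eps0 H H' * Real.rpow (H' : ℝ) (l * (H : ℝ) ^ 2)
      = Real.rpow (H' : ℝ) ((l - 1) * (H : ℝ) ^ 2) := by
    change eps0 H H' * (H' : ℝ) ^ (l * (H : ℝ) ^ 2) = (H' : ℝ) ^ ((l - 1) * (H : ℝ) ^ 2)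
    have h1 : (l - 1) * (H : ℝ) ^ 2 = l * (H : ℝ) ^ 2 - ((H ^ 2 : ℕ) : ℝ) := by
      push_cast
      ring
    rw [h1, Real.rpow_sub hpos, Real.rpow_natCast, eps0]
    field_simp
  unfold Ftr
  rw [Finset.sum_eq_single 0]
  · rw [hip, ← hr]
    simp
  · intro a _ ha
    simp [ha]
  · intro h
    exact absurd (Finset.mem_univ _) h
end
end

section
/- For every functional f : X → ℂ and every a ∈ X: (F(λ_b·f))(a) = −(D₋,b(Ff))(a) and (F(λ̄_b·f))(a) = (D₊,b(Ff))(a), where λ_b·f and λ̄_b·f denote pointwise products. -/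
open Complex Finset

noncomputable section

theorem bval_cast (n : ℕ) [NeZero n] (z : ZMod n) : ((bval n z : ℤ) : ZMod n) = z := by
  unfold bval
  split_ifs <;> simp

theorem Lp'_add (H' : ℕ) [NeZero H'] (u v : ZMod (H' ^ 2)) :
    ∃ n : ℤ, Lp' H' (u + v) = Lp' H' u + Lp' H' v + H' * n := by
  have h : ((bval (H' ^ 2) (u + v) - (bval (H' ^ 2) u + bval (H' ^ 2) v) : ℤ) :
      ZMod (H' ^ 2)) = 0 := by
    push_cast
    rw [bval_cast, bval_cast, bval_cast, sub_self]
  rw [ZMod.intCast_zmod_eq_zero_iff_dvd] at h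
  obtain ⟨n, hn⟩ := h
  refine ⟨n, ?_⟩
  have hR : (bval (H' ^ 2) (u + v) : ℝ) =
      bval (H' ^ 2) u + bval (H' ^ 2) v + (H' : ℝ) ^ 2 * n := by
    have h2 : bval (H' ^ 2) (u + v) =
      bval (H' ^ 2) u + bval (H' ^ 2) v + (H' : ℤ) ^ 2 * n := by
      push_cast at hn
      linarith
    exact_mod_cast h2
  have h0 : (H' : ℝ) ≠ 0 := Nat.cast_ne_zero.mpr (NeZero.ne H')
  unfold Lp'
  rw [hR]
  field_simp

theorem ip_add (H H' : ℕ) [NeZero H] [NeZero H'] (x a c : X H H') :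
    ∃ n : ℤ, ip H H' x (a + c) = ip H H' x a + ip H H' x c + n := by
  have h0 : (H' : ℝ) ≠ 0 := Nat.cast_ne_zero.mpr (NeZero.ne H')
  choose n hn using fun k => Lp'_add H' (a k) (c k)
  refine ⟨∑ k, bval (H' ^ 2) (x k) * n k, ?_⟩
  unfold ip
  push_cast
  rw [← Finset.sum_add_distrib, ← Finset.sum_add_distrib]
  refine Finset.sum_congr rfl fun k _ => ?_
  rw [Pi.add_apply, hn k]
  have : Lp' H' (x k) * H' = bval (H' ^ 2) (x k) := by
    unfold Lp'
    field_simp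
  rw [← this]
  ring

theorem ip_eb (H H' : ℕ) [NeZero H] (b eb x : X H H')
    (heb : ∀ k, Lp' H' (eb k) = eps' H' * Lp' H' (b k)) :
    ip H H' x eb = eps' H' * ip H H' x b := by
  unfold ip
  rw [Finset.mul_sum]
  refine Finset.sum_congr rfl fun k _ => ?_
  rw [heb]
  ring

theorem exp_shift (H H' : ℕ) [NeZero H] [NeZero H'] (b eb x a : X H H')
    (heb : ∀ k, Lp' H' (eb k) = eps' H' * Lp' H' (b k)) :
    Complex.exp (-2 * (Real.pi : ℂ) * I * (ip H H' x (a + eb) : ℂ)) =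
    Complex.exp (-2 * (Real.pi : ℂ) * I * (ip H H' x a : ℂ)) *
    Complex.exp (-2 * (Real.pi : ℂ) * I * (eps' H' : ℂ) * (ip H H' x b : ℂ)) := by
  obtain ⟨n, hn⟩ := ip_add H H' x a eb
  rw [hn, ip_eb H H' b eb x heb, ← Complex.exp_add, Complex.exp_eq_exp_iff_exists_int]
  refine ⟨-n, ?_⟩
  push_cast
  ring

/-- `(F(λ_b·f))(a) = −(D₋,b(Ff))(a)` and `(F(λ̄_b·f))(a) = (D₊,b(Ff))(a)`,
where `b ∈ X` takes values in `ℤ ∩ L′` and `eb = ε′b ∈ X`. -/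
theorem stmt9 (H H' : ℕ) [NeZero H] [NeZero H'] (hH : Even H) (hH' : Even H')
    (b eb : X H H')
    (hb : ∀ k, ∃ m : ℤ, Lp' H' (b k) = (m : ℝ))
    (heb : ∀ k, Lp' H' (eb k) = eps' H' * Lp' H' (b k))
    (f : X H H' → ℂ) (a : X H H') :
    Ftr H H' (fun x => lam H H' b x * f x) a = -(Dm H H' eb (Ftr H H' f) a) ∧
    Ftr H H' (fun x => lamBar H H' b x * f x) a = Dp H H' eb (Ftr H H' f) a := by
  constructor
  · unfold Dm
    rw [← neg_div, neg_sub]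
    unfold Ftr
    rw [← Finset.sum_sub_distrib, Finset.sum_div]
    refine Finset.sum_congr rfl fun x _ => ?_
    have h := exp_shift H H' b eb x (a - eb) heb
    rw [sub_add_cancel] at h
    have h2 : Complex.exp (-2 * (Real.pi : ℂ) * I * (ip H H' x (a - eb) : ℂ)) =
        Complex.exp (-2 * (Real.pi : ℂ) * I * (ip H H' x a : ℂ)) *
        Complex.exp (2 * (Real.pi : ℂ) * I * (eps' H' : ℂ) * (ip H H' x b : ℂ)) := by
      rw [h, ← Complex.exp_add, ← Complex.exp_add]
      congr 1
      ring
    rw [h2]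
    unfold lam
    ring
  · unfold Dp Ftr
    rw [← Finset.sum_sub_distrib, Finset.sum_div]
    refine Finset.sum_congr rfl fun x _ => ?_
    rw [exp_shift H H' b eb x a heb]
    unfold lamBar
    ring
end
end
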